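/- Let z, x ∈ X^n, let F be a class of functions X → Y, let V ⊆ F be nonempty with f ∈ V, and suppose the pair (h*, A*) minimizes (h, A) ↦ L_x(V, h, A) jointly over all h ∈ F and all subsets A ⊆ {1,…,n}. Then ℓ_x(f, h*, A*) ≤ (c/n)·|{i : x_i ≠ z_i}| + L_z(V, f). -/

import Mathlib

open Finset

/-- Selective test loss with abstention set `A`. -/
noncomputable def selLoss {X Y : Type*} (ℓ : Y → Y → ℝ) (c : ℝ) {n : ℕ}
    (x : Fin n → X) (f h : X → Y) (A : Finset (Fin n)) : ℝ :=
  c / (n : ℝ) * (A.card : ℝ) + (1 / (n : ℝ)) * ∑ i ∈ Aᶜ, ℓ (f (x i)) (h (x i))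

/-- `L_x(V,h,A) = sup_{g ∈ V} ℓ_x(g,h,A)`. -/
noncomputable def worstSelLoss {X Y : Type*} (ℓ : Y → Y → ℝ) (c : ℝ) {n : ℕ}
    (x : Fin n → X) (V : Set (X → Y)) (h : X → Y) (A : Finset (Fin n)) : ℝ :=
  ⨆ g ∈ V, selLoss ℓ c x g h A

/-- `L_z(V,h) = sup_{g ∈ V} (1/n)·Σ_i ℓ(g(z_i), h(z_i))`. -/
noncomputable def worstLoss {X Y : Type*} (ℓ : Y → Y → ℝ) {n : ℕ}
    (z : Fin n → X) (V : Set (X → Y)) (h : X → Y) : ℝ :=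
  ⨆ g ∈ V, (1 / (n : ℝ)) * ∑ i, ℓ (g (z i)) (h (z i))

/-!
Abstaining exactly where `x` and `z` disagree and predicting with `f` elsewhere is one of the
candidates that the minimizer competes with. On the remaining indices `x` and `z` agree, so its
loss on `x` against any `g ∈ V` is at most the price of abstention plus the loss of `f` against
`g` on `z`.
-/

section

variable {X Y : Type*} {ℓ : Y → Y → ℝ} {c : ℝ} {n : ℕ} {x z : Fin n → X} {V : Set (X → Y)}
  {f h : X → Y} {A : Finset (Fin n)}

open scoped BigOperators in
lemma selLoss_eq_expect :
    selLoss ℓ c x f h A = 𝔼 i, if i ∈ A then c else ℓ (f (x i)) (h (x i)) := by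
  have filter_notMem : (univ.filter fun i ↦ i ∉ A) = Aᶜ := by ext; simp
  rw [Fintype.expect_eq_sum_div_card, sum_ite, filter_univ_mem, filter_notMem, sum_const,
    nsmul_eq_mul, Fintype.card_fin, selLoss]
  ring

lemma selLoss_nonneg (hℓ : ∀ y y', 0 ≤ ℓ y y') (hc : 0 ≤ c) : 0 ≤ selLoss ℓ c x f h A := by
  rw [selLoss_eq_expect]
  refine expect_nonneg fun i _ ↦ ?_
  split_ifs
  exacts [hc, hℓ _ _]

lemma selLoss_le_max {B : ℝ} (hn : 0 < n) (hℓ : ∀ y y', ℓ y y' ≤ B) :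
    selLoss ℓ c x f h A ≤ max c B := by
  rw [selLoss_eq_expect]
  refine expect_le ⟨⟨0, hn⟩, mem_univ _⟩ fun i _ ↦ ?_
  split_ifs
  exacts [le_max_left c B, (hℓ _ _).trans (le_max_right c B)]

lemma selLoss_le_worstSelLoss {B : ℝ} (hn : 0 < n) (hℓ : ∀ y y', ℓ y y' ≤ B) (hf : f ∈ V) :
    selLoss ℓ c x f h A ≤ worstSelLoss ℓ c x V h A := by
  refine le_ciSup₂ (f := fun g (_ : g ∈ V) ↦ selLoss ℓ c x g h A) ⟨max c B, ?_⟩ f hf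
  simp only [mem_upperBounds, Set.mem_iUnion, Set.mem_range]
  rintro _ ⟨g, _, rfl⟩
  exact selLoss_le_max hn hℓ

lemma worstSelLoss_empty : worstSelLoss ℓ c x V h ∅ = worstLoss ℓ x V h := by
  simp [worstSelLoss, worstLoss, selLoss]

lemma selLoss_le_add_selLoss_empty (hℓ : ∀ y y', 0 ≤ ℓ y y') (hxz : ∀ i ∉ A, x i = z i) :
    selLoss ℓ c x f h A ≤ c / n * #A + selLoss ℓ c z f h ∅ := by
  have sum_le : ∑ i ∈ Aᶜ, ℓ (f (x i)) (h (x i)) ≤ ∑ i, ℓ (f (z i)) (h (z i)) :=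
    calc
      _ = ∑ i ∈ Aᶜ, ℓ (f (z i)) (h (z i)) :=
        sum_congr rfl fun i hi ↦ by rw [hxz i (mem_compl.mp hi)]
      _ ≤ _ := sum_le_univ_sum_of_nonneg fun _ ↦ hℓ _ _
  simp only [selLoss, card_empty, Nat.cast_zero, mul_zero, zero_add, compl_empty]
  gcongr

lemma worstSelLoss_le_add_worstLoss {B : ℝ} (hn : 0 < n) (hℓ : ∀ y y', ℓ y y' ∈ Set.Icc 0 B)
    (hc : 0 ≤ c) (hV : V.Nonempty) (hxz : ∀ i ∉ A, x i = z i) :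
    worstSelLoss ℓ c x V h A ≤ c / n * #A + worstLoss ℓ z V h := by
  have hℓ_nonneg : ∀ y y', 0 ≤ ℓ y y' := fun y y' ↦ (hℓ y y').1
  have selLoss_le : ∀ g ∈ V, selLoss ℓ c x g h A ≤ c / n * #A + worstLoss ℓ z V h := by
    intro g hg
    rw [← worstSelLoss_empty (c := c)]
    exact (selLoss_le_add_selLoss_empty hℓ_nonneg hxz).trans <|
      add_le_add_right (selLoss_le_worstSelLoss hn (fun y y' ↦ (hℓ y y').2) hg) _
  -- The real supremum over `g ∈ V` counts every `g ∉ V` as `0`, so the bound must be nonnegative.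
  have bound_nonneg : 0 ≤ c / n * #A + worstLoss ℓ z V h := by
    obtain ⟨g, hg⟩ := hV
    exact (selLoss_nonneg hℓ_nonneg hc).trans (selLoss_le g hg)
  exact Real.iSup_le (fun g ↦ Real.iSup_le (selLoss_le g) bound_nonneg) bound_nonneg

end

theorem stmt_1_general {X Y : Type*} [DecidableEq X] {ℓ : Y → Y → ℝ} {B : ℝ}
    (hℓ : ∀ y y', ℓ y y' ∈ Set.Icc 0 B) {c : ℝ} (hc : 0 ≤ c) {n : ℕ} (hn : 0 < n)
    (z x : Fin n → X) {F V : Set (X → Y)} {f : X → Y} (hfF : f ∈ F) (hfV : f ∈ V)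
    {hstar : X → Y} {Astar : Finset (Fin n)}
    (hmin : ∀ h ∈ F, ∀ A : Finset (Fin n),
      worstSelLoss ℓ c x V hstar Astar ≤ worstSelLoss ℓ c x V h A) :
    selLoss ℓ c x f hstar Astar ≤ c / n * #{i | x i ≠ z i} + worstLoss ℓ z V f :=
  calc
    selLoss ℓ c x f hstar Astar ≤ worstSelLoss ℓ c x V hstar Astar :=
      selLoss_le_worstSelLoss hn (fun y y' ↦ (hℓ y y').2) hfV
    _ ≤ worstSelLoss ℓ c x V f {i | x i ≠ z i} := hmin f hfF _
    _ ≤ c / n * #{i | x i ≠ z i} + worstLoss ℓ z V f :=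
      worstSelLoss_le_add_worstLoss hn hℓ hc ⟨f, hfV⟩ fun i hi ↦ by simpa using hi

theorem stmt_1 {X Y : Type*} [Countable X] [DecidableEq X]
    (ℓ : Y → Y → ℝ) (hℓ : ∀ y y', ℓ y y' ∈ Set.Icc (0 : ℝ) 1)
    (c : ℝ) (hc : c ∈ Set.Ioc (0 : ℝ) 1) {n : ℕ} (hn : 0 < n)
    (z x : Fin n → X) (F : Set (X → Y)) (V : Set (X → Y)) (hVF : V ⊆ F)
    (hV : V.Nonempty) (f : X → Y) (hf : f ∈ V)
    (hstar : X → Y) (hhF : hstar ∈ F) (Astar : Finset (Fin n))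
    (hmin : ∀ h ∈ F, ∀ A : Finset (Fin n),
      worstSelLoss ℓ c x V hstar Astar ≤ worstSelLoss ℓ c x V h A) :
    selLoss ℓ c x f hstar Astar ≤
      c / (n : ℝ) * ((univ.filter fun i => x i ≠ z i).card : ℝ) + worstLoss ℓ z V f :=
  stmt_1_general hℓ hc.1.le hn z x (hVF hf) hf hmin
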